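/- arXiv:2403.12575 — 6 statements merged into one kernel-verified Lean document; each statement's English description precedes it below -/
import Mathlib

section
/- Membership in the non-observable subspace is decided by words of length at most n². That is, for a matrix X, one has X ∈ N if and only if C(M_w X) = 0 for every word w over Ω of length at most n² (where n² = dim of the space of n×n matrices). -/
open Matrix

/-- Composition of the conditional maps along a word `w = [k₀, …, k_t]`:
`Mword M w = M_{k_t} ∘ ⋯ ∘ M_{k₀}` (the empty word gives the identity). -/
def Mword {Ω V : Type*} [AddCommMonoid V] [Module ℂ V]
    (M : Ω → V →ₗ[ℂ] V) : List Ω → (V →ₗ[ℂ] V)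
  | [] => LinearMap.id
  | k :: w => (Mword M w).comp (M k)

/-- The non-observable subspace `N = {X | C (M_w X) = 0 for every word w}`. -/
def NonObs {Ω : Type*} {n : ℕ} {Y : Type*} [AddCommGroup Y] [Module ℂ Y]
    (M : Ω → Matrix (Fin n) (Fin n) ℂ →ₗ[ℂ] Matrix (Fin n) (Fin n) ℂ)
    (C : Matrix (Fin n) (Fin n) ℂ →ₗ[ℂ] Y) : Set (Matrix (Fin n) (Fin n) ℂ) :=
  {X | ∀ w : List Ω, C (Mword M w X) = 0}

/-!
The matrices undetected by words of length at most `k` form a decreasing sequence of subspaces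
`N_k` starting at `N_0 = ker C`. A word of positive length first applies some `M o`, so `N_{k+1}`
is determined by `N_k`, and the sequence is constant from the first repetition on. Before that each
step lowers the dimension, which can happen at most `dim (ker C) ≤ n²` times.
-/

section Stabilization

open Module

variable {K V : Type*} [DivisionRing K] [AddCommGroup V] [Module K V]

lemma submodule_eq_of_antitone_of_finrank_le {N : ℕ → Submodule K V}
    [FiniteDimensional K (N 0)] (hN : Antitone N)
    (hstable : ∀ k, N k = N (k + 1) → N (k + 1) = N (k + 2))
    {m : ℕ} (hm : finrank K (N 0) ≤ m) :
    N m = N (finrank K (N 0)) := by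
  have finDim (k : ℕ) : FiniteDimensional K (N k) :=
    Submodule.finiteDimensional_of_le (hN k.zero_le)
  have finrank_antitone : Antitone fun k => finrank K (N k) :=
    fun _ _ h => Submodule.finrank_mono (hN h)
  let codim (U : Submodule K V) : ℕ := finrank K (N 0) - finrank K U
  have codim_monotone : Monotone fun k => codim (N k) :=
    fun _ _ h => Nat.sub_le_sub_left (finrank_antitone h) _
  have eq_of_codim_eq {i j : ℕ} (hij : i ≤ j) (h : codim (N j) = codim (N i)) : N j = N i := by
    have finrank_eq : finrank K (N j) = finrank K (N i) :=
      (tsub_right_inj (finrank_antitone j.zero_le) (finrank_antitone i.zero_le)).1 h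
    exact Submodule.eq_of_le_of_finrank_eq (hN hij) finrank_eq
  have codim_stable (k : ℕ) (h : codim (N k) = codim (N (k + 1))) :
      codim (N (k + 1)) = codim (N (k + 2)) :=
    congrArg codim (hstable k (eq_of_codim_eq k.le_succ h.symm).symm)
  exact eq_of_codim_eq hm <| Nat.stabilises_of_monotone (f := fun k => codim (N k))
    codim_monotone (fun _ => Nat.sub_le _ _) codim_stable hm

end Stabilization

section NonObsUpTo

open Module

variable {Ω V Y : Type*} [AddCommGroup V] [Module ℂ V] [AddCommGroup Y] [Module ℂ Y]
  (M : Ω → V →ₗ[ℂ] V) (C : V →ₗ[ℂ] Y)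

/-- The subspace `N_k` of vectors that no word of length at most `k` detects through the output
`C`, as an intersection of kernels; `NonObs` is the intersection of all the `N_k`. -/
def nonObsUpTo (k : ℕ) : Submodule ℂ V :=
  ⨅ (w : List Ω) (_ : w.length ≤ k), LinearMap.ker (C ∘ₗ Mword M w)

variable {M C} in
lemma mem_nonObsUpTo {k : ℕ} {X : V} :
    X ∈ nonObsUpTo M C k ↔ ∀ w : List Ω, w.length ≤ k → C (Mword M w X) = 0 := by
  simp [nonObsUpTo]

lemma nonObsUpTo_antitone : Antitone (nonObsUpTo M C) :=
  fun _ _ h => biInf_mono fun _ hw => hw.trans h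

lemma nonObsUpTo_zero : nonObsUpTo M C 0 = LinearMap.ker C := by
  ext X
  simp [mem_nonObsUpTo, Mword]

lemma nonObsUpTo_succ (k : ℕ) :
    nonObsUpTo M C (k + 1) = LinearMap.ker C ⊓ ⨅ o, (nonObsUpTo M C k).comap (M o) := by
  ext X
  simp only [Submodule.mem_inf, Submodule.mem_iInf, Submodule.mem_comap, LinearMap.mem_ker,
    mem_nonObsUpTo]
  constructor
  · intro h
    exact ⟨h [] (Nat.zero_le _), fun o w hw => h (o :: w) (Nat.succ_le_succ hw)⟩
  · rintro ⟨h_nil, h_cons⟩ (_ | ⟨o, w⟩) hw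
    · exact h_nil
    · exact h_cons o w (Nat.le_of_succ_le_succ hw)

lemma nonObsUpTo_eq_of_finrank_ker_le [FiniteDimensional ℂ (LinearMap.ker C)] {m : ℕ}
    (hm : finrank ℂ (LinearMap.ker C) ≤ m) :
    nonObsUpTo M C m = nonObsUpTo M C (finrank ℂ (LinearMap.ker C)) := by
  have stable (k : ℕ) (h : nonObsUpTo M C k = nonObsUpTo M C (k + 1)) :
      nonObsUpTo M C (k + 1) = nonObsUpTo M C (k + 2) := by
    rw [nonObsUpTo_succ M C k, h, ← nonObsUpTo_succ]
  have : FiniteDimensional ℂ (nonObsUpTo M C 0) := by rwa [nonObsUpTo_zero]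
  rw [← nonObsUpTo_zero M C] at hm ⊢
  exact submodule_eq_of_antitone_of_finrank_le (nonObsUpTo_antitone M C) stable hm

theorem mem_nonObs_iff_short_words_general [FiniteDimensional ℂ (LinearMap.ker C)] (X : V) :
    (∀ w : List Ω, C (Mword M w X) = 0) ↔
      ∀ w : List Ω, w.length ≤ finrank ℂ (LinearMap.ker C) → C (Mword M w X) = 0 := by
  refine ⟨fun h w _ => h w, fun h w => ?_⟩
  rcases le_total w.length (finrank ℂ (LinearMap.ker C)) with hw | hw
  · exact h w hw
  · have hX : X ∈ nonObsUpTo M C w.length := by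
      rw [nonObsUpTo_eq_of_finrank_ker_le M C hw]
      exact mem_nonObsUpTo.2 h
    exact mem_nonObsUpTo.1 hX w le_rfl

end NonObsUpTo

/-- Membership in the non-observable subspace is decided by words of length at most
`n² = dim (Matrix n n ℂ)`. -/
theorem mem_nonObs_iff_short_words {Ω : Type*} [Fintype Ω] {n : ℕ} (hn : 1 ≤ n)
    {Y : Type*} [AddCommGroup Y] [Module ℂ Y] [FiniteDimensional ℂ Y]
    (M : Ω → Matrix (Fin n) (Fin n) ℂ →ₗ[ℂ] Matrix (Fin n) (Fin n) ℂ)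
    (C : Matrix (Fin n) (Fin n) ℂ →ₗ[ℂ] Y)
    (X : Matrix (Fin n) (Fin n) ℂ) :
    X ∈ NonObs M C ↔ ∀ w : List Ω, w.length ≤ n ^ 2 → C (Mword M w X) = 0 := by
  have finrank_ker_le : Module.finrank ℂ (LinearMap.ker C) ≤ n ^ 2 :=
    (LinearMap.ker C).finrank_le.trans_eq (by simp [Module.finrank_matrix, sq])
  exact ⟨fun h w _ => h w, fun h => (mem_nonObs_iff_short_words_general M C X).2 fun w hw =>
    h w (hw.trans finrank_ker_le)⟩
end

section
/- Switching-system reduction by a projector: let Π be a linear map on the n×n complex matrices with Π ∘ Π = Π and ker Π ⊆ N (this holds in particular for the orthogonal projection onto any subspace V containing the Hilbert–Schmidt orthogonal complement of N). Then for every matrix ρ and every word w = [k_0, …, k_t] over Ω, C(M_w ρ) = C( Π ∘ M_{k_t} ∘ Π ∘ ⋯ ∘ Π ∘ M_{k_0} ∘ Π ) ρ, i.e. the output of the switching dynamics is unchanged when every factor M_k is sandwiched between copies of Π. -/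
open Matrix

/-- Sandwiched composition along the word `w = [k₀, …, k_t]`:
`SWord P M w = P ∘ M_{k_t} ∘ P ∘ ⋯ ∘ P ∘ M_{k₀} ∘ P` (the empty word gives `P`). -/
def SWord {Ω V : Type*} [AddCommMonoid V] [Module ℂ V]
    (P : V →ₗ[ℂ] V) (M : Ω → V →ₗ[ℂ] V) : List Ω → (V →ₗ[ℂ] V)
  | [] => P
  | k :: w => (SWord P M w).comp ((M k).comp P)

section

variable {Ω V Y : Type*} [AddCommGroup V] [Module ℂ V] [AddCommMonoid Y] [Module ℂ Y]
  {M : Ω → V →ₗ[ℂ] V} {C : V →ₗ[ℂ] Y} {P : V →ₗ[ℂ] V}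

variable (M C) in
/-- The unobservable subspace of the switching system `(M, C)` on an arbitrary state space `V`:
the states with zero output along every word. For `V` a space of matrices, its underlying set is
`NonObs M C`. -/
def unobservableSubspace : Submodule ℂ V :=
  ⨅ w : List Ω, LinearMap.ker (C ∘ₗ Mword M w)

theorem mem_unobservableSubspace {X : V} :
    X ∈ unobservableSubspace M C ↔ ∀ w : List Ω, C (Mword M w X) = 0 := by
  simp only [unobservableSubspace, Submodule.mem_iInf, LinearMap.mem_ker, LinearMap.comp_apply]

theorem output_eq_of_sub_mem_unobservableSubspace {X X' : V}
    (h : X - X' ∈ unobservableSubspace M C) (w : List Ω) :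
    C (Mword M w X) = C (Mword M w X') :=
  calc
    C (Mword M w X) = C (Mword M w (X - X')) + C (Mword M w X') := by
      rw [← map_add, ← map_add, sub_add_cancel]
    _ = C (Mword M w X') := by rw [mem_unobservableSubspace.mp h w, zero_add]

theorem switching_reduction_general
    (hP : LinearMap.range (LinearMap.id - P) ≤ unobservableSubspace M C) (ρ : V) (w : List Ω) :
    C (Mword M w ρ) = C (SWord P M w ρ) := by
  have hsub (X : V) : X - P X ∈ unobservableSubspace M C := hP (LinearMap.mem_range_self _ X)
  induction w generalizing ρ with
  | nil => exact output_eq_of_sub_mem_unobservableSubspace (hsub ρ) []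
  | cons k w ih =>
    calc
      C (Mword M (k :: w) ρ) = C (Mword M (k :: w) (P ρ)) :=
        output_eq_of_sub_mem_unobservableSubspace (hsub ρ) (k :: w)
      _ = C (Mword M w (M k (P ρ))) := rfl
      _ = C (SWord P M w (M k (P ρ))) := ih (M k (P ρ))
      _ = C (SWord P M (k :: w) ρ) := rfl

end

/-- Switching-system reduction by a projector `Π` with `Π ∘ Π = Π` and `ker Π ⊆ N`:
sandwiching every factor `M_k` between copies of `Π` does not change the output. -/
theorem switching_reduction {Ω : Type*} [Fintype Ω] {n : ℕ} (hn : 1 ≤ n)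
    {Y : Type*} [AddCommGroup Y] [Module ℂ Y] [FiniteDimensional ℂ Y]
    (M : Ω → Matrix (Fin n) (Fin n) ℂ →ₗ[ℂ] Matrix (Fin n) (Fin n) ℂ)
    (C : Matrix (Fin n) (Fin n) ℂ →ₗ[ℂ] Y)
    (P : Matrix (Fin n) (Fin n) ℂ →ₗ[ℂ] Matrix (Fin n) (Fin n) ℂ)
    (hP : P.comp P = P)
    (hker : ∀ X, P X = 0 → X ∈ NonObs M C) :
    ∀ (ρ : Matrix (Fin n) (Fin n) ℂ) (w : List Ω),
      C (Mword M w ρ) = C (SWord P M w ρ) :=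
  switching_reduction_general <| (LinearMap.IsIdempotentElem.ker_eq_range hP).ge.trans
    fun X hX => mem_unobservableSubspace.mpr (hker X hX)
end

section
/- Exact linear model reduction: let W be a finite-dimensional complex vector space and let R : Matrix n n ℂ →ₗ[ℂ] W and J : W →ₗ[ℂ] Matrix n n ℂ be linear maps with R ∘ J = id_W and ker(J ∘ R) ⊆ N. Define the reduced dynamics A_k = R ∘ M_k ∘ J for each k ∈ Ω and the reduced output map Č = C ∘ J. Then for every matrix ρ and every word w = [k_0, …, k_t] over Ω, C(M_w ρ) = Č( A_{k_t} ∘ ⋯ ∘ A_{k_0} (R ρ) ), i.e. the reduced model driven by the same outcome sequence reproduces the output of the original conditional evolution from the reduced initial condition R ρ. -/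
open Matrix

theorem sub_apply_apply_mem_ker_of_comp_eq_id {S V W : Type*} [Semiring S]
    [AddCommGroup V] [Module S V] [AddCommGroup W] [Module S W]
    {R : V →ₗ[S] W} {J : W →ₗ[S] V} (hRJ : R ∘ₗ J = LinearMap.id) (x : V) :
    x - J (R x) ∈ LinearMap.ker R := by
  rw [LinearMap.mem_ker, map_sub, ← LinearMap.comp_apply R J, hRJ, LinearMap.id_apply, sub_self]

section Observability

variable {Ω V Y : Type*} [AddCommGroup V] [Module ℂ V] [AddCommGroup Y] [Module ℂ Y]

/-- The non-observable subspace of a conditional evolution on an arbitrary complex vector space,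
bundled as a submodule; on matrices its underlying set is `NonObs M C`. -/
def nonObsSubmodule (M : Ω → V →ₗ[ℂ] V) (C : V →ₗ[ℂ] Y) : Submodule ℂ V :=
  ⨅ w : List Ω, LinearMap.ker (C ∘ₗ Mword M w)

variable {M : Ω → V →ₗ[ℂ] V} {C : V →ₗ[ℂ] Y}

theorem mem_nonObsSubmodule {x : V} :
    x ∈ nonObsSubmodule M C ↔ ∀ w : List Ω, C (Mword M w x) = 0 := by
  simp [nonObsSubmodule]

theorem sub_mem_nonObsSubmodule_iff {x y : V} :
    x - y ∈ nonObsSubmodule M C ↔ ∀ w : List Ω, C (Mword M w x) = C (Mword M w y) := by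
  simp [mem_nonObsSubmodule, sub_eq_zero]

theorem exact_linear_reduction_general {W : Type*} [AddCommGroup W] [Module ℂ W]
    {R : V →ₗ[ℂ] W} {J : W →ₗ[ℂ] V}
    (hJR : ∀ x, x - J (R x) ∈ nonObsSubmodule M C) (x : V) (w : List Ω) :
    C (Mword M w x) = C (J (Mword (fun k => R ∘ₗ M k ∘ₗ J) w (R x))) := by
  have output_eq (y : V) : ∀ v, C (Mword M v y) = C (Mword M v (J (R y))) :=
    sub_mem_nonObsSubmodule_iff.mp (hJR y)
  induction w generalizing x with
  | nil => exact output_eq x []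
  | cons k₀ w ih =>
    -- Once `x` is replaced by `J (R x)`, compressing the state after `M k₀` to `W` gives exactly
    -- the first reduced state, so the induction restarts from `M k₀ (J (R x))`.
    calc
      C (Mword M (k₀ :: w) x) = C (Mword M w (M k₀ (J (R x)))) := output_eq x (k₀ :: w)
      _ = C (J (Mword (fun k => R ∘ₗ M k ∘ₗ J) w (R (M k₀ (J (R x)))))) := ih (M k₀ (J (R x)))

end Observability

/-- Exact linear model reduction: with `R ∘ J = id` and `ker (J ∘ R) ⊆ N`, the reduced model
with dynamics `A_k = R ∘ M_k ∘ J`, output `Č = C ∘ J` and initial condition `R ρ`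
reproduces the output of the original conditional evolution along every outcome word. -/
theorem exact_linear_reduction {Ω : Type*} [Fintype Ω] {n : ℕ} (hn : 1 ≤ n)
    {Y : Type*} [AddCommGroup Y] [Module ℂ Y] [FiniteDimensional ℂ Y]
    {W : Type*} [AddCommGroup W] [Module ℂ W] [FiniteDimensional ℂ W]
    (M : Ω → Matrix (Fin n) (Fin n) ℂ →ₗ[ℂ] Matrix (Fin n) (Fin n) ℂ)
    (C : Matrix (Fin n) (Fin n) ℂ →ₗ[ℂ] Y)
    (R : Matrix (Fin n) (Fin n) ℂ →ₗ[ℂ] W) (J : W →ₗ[ℂ] Matrix (Fin n) (Fin n) ℂ)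
    (hRJ : R.comp J = LinearMap.id)
    (hker : ∀ X, J (R X) = 0 → X ∈ NonObs M C) :
    ∀ (ρ : Matrix (Fin n) (Fin n) ℂ) (w : List Ω),
      C (Mword M w ρ) =
        C (J (Mword (fun k => R.comp ((M k).comp J)) w (R ρ))) := by
  have map_defect (X) : J (R (X - J (R X))) = 0 := by
    rw [LinearMap.mem_ker.mp (sub_apply_apply_mem_ker_of_comp_eq_id hRJ X), map_zero]
  exact exact_linear_reduction_general fun X => mem_nonObsSubmodule.mpr (hker _ (map_defect X))
end

section
/- Observability (minimality) of the reduced model: let W be a finite-dimensional complex vector space and let R : Matrix n n ℂ →ₗ[ℂ] W, J : W →ₗ[ℂ] Matrix n n ℂ satisfy R ∘ J = id_W and ker(J ∘ R) = N (the projector J ∘ R has kernel exactly the non-observable subspace). Define A_k = R ∘ M_k ∘ J and Č = C ∘ J. Then the reduced conditional evolution is observable: the only x ∈ W with Č(A_{k_t} ∘ ⋯ ∘ A_{k_0} x) = 0 for every word [k_0, …, k_t] over Ω (including the empty word, i.e. Č x = 0) is x = 0. -/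
/-!
Since `R ∘ J = id`, the difference `J (R X) - X` is killed by the projector `J ∘ R`, hence lies in
the non-observable subspace, so `X` and `J (R X)` give the same output along every word.
Inductively, the reduced model started at `x` and the full model started at `J x` have the same
outputs: the non-observable subspace of the reduced model is the preimage under `J` of the one of
the full model, that is of `ker (J ∘ R)`, and `J ∘ R ∘ J = J` is injective.
-/

open Matrix

section ConditionalEvolution

variable {Ω V W Y : Type*} [AddCommGroup V] [Module ℂ V] [AddCommGroup W] [Module ℂ W]
  [AddCommGroup Y] [Module ℂ Y]

/-- The non-observable subspace of a conditional evolution on an arbitrary state space `V`, as a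
submodule. On matrices its underlying set is, by definition, `NonObs M C`. -/
def nonObservable (M : Ω → V →ₗ[ℂ] V) (C : V →ₗ[ℂ] Y) : Submodule ℂ V where
  carrier := {X | ∀ w : List Ω, C (Mword M w X) = 0}
  zero_mem' w := by simp only [map_zero]
  add_mem' hX hX' w := by rw [map_add, map_add, hX w, hX' w, add_zero]
  smul_mem' c X hX w := by rw [map_smul, map_smul, hX w, smul_zero]

/-- The dynamics `A_k = R ∘ M_k ∘ J` of the model reduced along `R : V → W` and `J : W → V`; the
reduced output map is `C ∘ J`. -/
def reducedDynamics (M : Ω → V →ₗ[ℂ] V) (R : V →ₗ[ℂ] W) (J : W →ₗ[ℂ] V) : Ω → W →ₗ[ℂ] W :=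
  fun k => R ∘ₗ M k ∘ₗ J

theorem sub_mem_nonObservable_iff {M : Ω → V →ₗ[ℂ] V} {C : V →ₗ[ℂ] Y} {X X' : V} :
    X - X' ∈ nonObservable M C ↔ ∀ w : List Ω, C (Mword M w X) = C (Mword M w X') :=
  forall_congr' fun w => by rw [map_sub, map_sub, sub_eq_zero]

variable {M : Ω → V →ₗ[ℂ] V} {C : V →ₗ[ℂ] Y} {R : V →ₗ[ℂ] W} {J : W →ₗ[ℂ] V}

theorem output_reducedDynamics (h : ∀ X, J (R X) - X ∈ nonObservable M C) (w : List Ω) (x : W) :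
    C (J (Mword (reducedDynamics M R J) w x)) = C (Mword M w (J x)) := by
  induction w generalizing x with
  | nil => rfl
  | cons k w ih =>
    calc C (J (Mword (reducedDynamics M R J) w (R (M k (J x)))))
        = C (Mword M w (J (R (M k (J x))))) := ih _
      _ = C (Mword M w (M k (J x))) := sub_mem_nonObservable_iff.1 (h _) w

theorem nonObservable_reducedDynamics (h : ∀ X, J (R X) - X ∈ nonObservable M C) :
    nonObservable (reducedDynamics M R J) (C ∘ₗ J) = (nonObservable M C).comap J :=
  Submodule.ext fun x => forall_congr' fun w => by
    rw [LinearMap.comp_apply, output_reducedDynamics h]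

theorem reduced_model_observable_general (hRJ : R ∘ₗ J = LinearMap.id)
    (hker : LinearMap.ker (J ∘ₗ R) = nonObservable M C) :
    nonObservable (reducedDynamics M R J) (C ∘ₗ J) = ⊥ := by
  have hleft : Function.LeftInverse R J := LinearMap.congr_fun hRJ
  have hproj (X : V) : J (R X) - X ∈ nonObservable M C := by
    rw [← hker, LinearMap.mem_ker, LinearMap.comp_apply, map_sub, hleft, sub_self, map_zero]
  calc nonObservable (reducedDynamics M R J) (C ∘ₗ J)
      = (LinearMap.ker (J ∘ₗ R)).comap J := by rw [nonObservable_reducedDynamics hproj, hker]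
    _ = LinearMap.ker (J ∘ₗ R ∘ₗ J) := rfl
    _ = LinearMap.ker J := by rw [hRJ, LinearMap.comp_id]
    _ = ⊥ := LinearMap.ker_eq_bot.2 hleft.injective

end ConditionalEvolution

/-- Observability (minimality) of the reduced model: if `R ∘ J = id` and the projector
`J ∘ R` has kernel exactly `N`, then the reduced conditional evolution with dynamics
`A_k = R ∘ M_k ∘ J` and output `Č = C ∘ J` is observable. -/
theorem reduced_model_observable {Ω : Type*} [Fintype Ω] {n : ℕ} (hn : 1 ≤ n)
    {Y : Type*} [AddCommGroup Y] [Module ℂ Y] [FiniteDimensional ℂ Y]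
    {W : Type*} [AddCommGroup W] [Module ℂ W] [FiniteDimensional ℂ W]
    (M : Ω → Matrix (Fin n) (Fin n) ℂ →ₗ[ℂ] Matrix (Fin n) (Fin n) ℂ)
    (C : Matrix (Fin n) (Fin n) ℂ →ₗ[ℂ] Y)
    (R : Matrix (Fin n) (Fin n) ℂ →ₗ[ℂ] W) (J : W →ₗ[ℂ] Matrix (Fin n) (Fin n) ℂ)
    (hRJ : R.comp J = LinearMap.id)
    (hker : ∀ X, J (R X) = 0 ↔ X ∈ NonObs M C) :
    ∀ x : W,
      (∀ w : List Ω, C (J (Mword (fun k => R.comp ((M k).comp J)) w x)) = 0) →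
      x = 0 :=
  (Submodule.eq_bot_iff _).1 (reduced_model_observable_general hRJ (Submodule.ext hker))
end

section
/- Reproduction of trajectory probabilities: let R : Matrix n n ℂ →ₗ[ℂ] W and J : W →ₗ[ℂ] Matrix n n ℂ satisfy R ∘ J = id_W and ker(J ∘ R) ⊆ N_tr, where N_tr = {X : trace(M_w X) = 0 for every word w over Ω}. Define A_k = R ∘ M_k ∘ J. Then for every matrix ρ and every word w = [k_0, …, k_t] over Ω, trace(M_w ρ) = trace( J (A_{k_t} ∘ ⋯ ∘ A_{k_0} (R ρ)) ); in particular the reduced model reproduces the joint probability trace of every outcome trajectory. -/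
/-!
If `J ∘ R` is idempotent, then `X - J (R X)` lies in `ker (J ∘ R)`; when this kernel is
non-observable, replacing `X` by `J (R X)` changes no output along any word. Making this replacement
before each letter of the word turns the dynamics `M_k` into `R ∘ M_k ∘ J`.
-/

open Matrix

/-- The non-observable subspace for the trace output alone:
`N_tr = {X | trace (M_w X) = 0 for every word w}`. -/
def NonObsTr {Ω : Type*} {n : ℕ}
    (M : Ω → Matrix (Fin n) (Fin n) ℂ →ₗ[ℂ] Matrix (Fin n) (Fin n) ℂ) :
    Set (Matrix (Fin n) (Fin n) ℂ) :=
  {X | ∀ w : List Ω, Matrix.trace (Mword M w X) = 0}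

theorem isIdempotentElem_comp_of_comp_eq_id {S V W : Type*} [Semiring S] [AddCommMonoid V]
    [Module S V] [AddCommMonoid W] [Module S W] {R : V →ₗ[S] W} {J : W →ₗ[S] V}
    (hRJ : R ∘ₗ J = LinearMap.id) : IsIdempotentElem (J ∘ₗ R) :=
  LinearMap.ext fun X => congrArg J (LinearMap.congr_fun hRJ (R X))

section Definitions

variable {Ω V W Y : Type*} [AddCommMonoid V] [Module ℂ V] [AddCommMonoid W] [Module ℂ W]
  [AddCommMonoid Y] [Module ℂ Y]

/-- The non-observable subspace of the dynamics `M` for a linear output map `C`: the states whose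
output vanishes along every word. -/
def nonObservableSubspace (M : Ω → V →ₗ[ℂ] V) (C : V →ₗ[ℂ] Y) : Submodule ℂ V :=
  ⨅ w : List Ω, LinearMap.ker (C ∘ₗ Mword M w)

/-- The reduced dynamics `A_k = R ∘ M_k ∘ J` on `W` obtained from the reduction `R` and the
lift `J`. -/
def reducedModel (M : Ω → V →ₗ[ℂ] V) (R : V →ₗ[ℂ] W) (J : W →ₗ[ℂ] V) : Ω → W →ₗ[ℂ] W :=
  fun k => R ∘ₗ M k ∘ₗ J

theorem mem_nonObservableSubspace {M : Ω → V →ₗ[ℂ] V} {C : V →ₗ[ℂ] Y} {X : V} :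
    X ∈ nonObservableSubspace M C ↔ ∀ w : List Ω, C (Mword M w X) = 0 := by
  simp [nonObservableSubspace]

end Definitions

section LinearOutput

variable {Ω V W Y : Type*} [AddCommGroup V] [Module ℂ V] [AddCommMonoid W] [Module ℂ W]
  [AddCommGroup Y] [Module ℂ Y]

theorem sub_mem_nonObservableSubspace {M : Ω → V →ₗ[ℂ] V} {C : V →ₗ[ℂ] Y} {X X' : V} :
    X - X' ∈ nonObservableSubspace M C ↔ ∀ w : List Ω, C (Mword M w X) = C (Mword M w X') := by
  simp only [mem_nonObservableSubspace, map_sub, sub_eq_zero]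

theorem output_Mword_eq_output_Mword_reducedModel {M : Ω → V →ₗ[ℂ] V} {C : V →ₗ[ℂ] Y}
    {R : V →ₗ[ℂ] W} {J : W →ₗ[ℂ] V} (h : ∀ X, X - J (R X) ∈ nonObservableSubspace M C)
    (X : V) (w : List Ω) :
    C (Mword M w X) = C (J (Mword (reducedModel M R J) w (R X))) := by
  have output_eq (X : V) (w : List Ω) : C (Mword M w X) = C (Mword M w (J (R X))) :=
    sub_mem_nonObservableSubspace.mp (h X) w
  induction w generalizing X with
  | nil => exact output_eq X []
  | cons k w ih =>
    calc
      C (Mword M (k :: w) X) = C (Mword M w (M k (J (R X)))) := output_eq X (k :: w)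
      _ = C (J (Mword (reducedModel M R J) w (R (M k (J (R X)))))) := ih (M k (J (R X)))

theorem reduced_model_trajectory_probabilities_general {M : Ω → V →ₗ[ℂ] V} {C : V →ₗ[ℂ] Y}
    {R : V →ₗ[ℂ] W} {J : W →ₗ[ℂ] V} (hJR : IsIdempotentElem (J ∘ₗ R))
    (hker : LinearMap.ker (J ∘ₗ R) ≤ nonObservableSubspace M C) (X : V) (w : List Ω) :
    C (Mword M w X) = C (J (Mword (reducedModel M R J) w (R X))) := by
  have sub_mem_ker (X : V) : X - J (R X) ∈ LinearMap.ker (J ∘ₗ R) :=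
    LinearMap.sub_mem_ker_iff.mpr (LinearMap.congr_fun hJR X).symm
  exact output_Mword_eq_output_Mword_reducedModel (fun X => hker (sub_mem_ker X)) X w

end LinearOutput

theorem mem_nonObservableSubspace_trace {Ω : Type*} {n : ℕ}
    {M : Ω → Matrix (Fin n) (Fin n) ℂ →ₗ[ℂ] Matrix (Fin n) (Fin n) ℂ}
    {X : Matrix (Fin n) (Fin n) ℂ} :
    X ∈ nonObservableSubspace M (traceLinearMap (Fin n) ℂ ℂ) ↔ X ∈ NonObsTr M :=
  mem_nonObservableSubspace

/-- Reproduction of trajectory probabilities: if `R ∘ J = id` and `ker (J ∘ R) ⊆ N_tr`,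
the reduced model with dynamics `A_k = R ∘ M_k ∘ J` reproduces the joint probability
trace of every outcome trajectory. -/
theorem reduced_model_trajectory_probabilities {Ω : Type*} [Fintype Ω] {n : ℕ} (hn : 1 ≤ n)
    {W : Type*} [AddCommGroup W] [Module ℂ W] [FiniteDimensional ℂ W]
    (M : Ω → Matrix (Fin n) (Fin n) ℂ →ₗ[ℂ] Matrix (Fin n) (Fin n) ℂ)
    (R : Matrix (Fin n) (Fin n) ℂ →ₗ[ℂ] W) (J : W →ₗ[ℂ] Matrix (Fin n) (Fin n) ℂ)
    (hRJ : R.comp J = LinearMap.id)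
    (hker : ∀ X, J (R X) = 0 → X ∈ NonObsTr M) :
    ∀ (ρ : Matrix (Fin n) (Fin n) ℂ) (w : List Ω),
      Matrix.trace (Mword M w ρ) =
        Matrix.trace (J (Mword (fun k => R.comp ((M k).comp J)) w (R ρ))) := by
  exact reduced_model_trajectory_probabilities_general (isIdempotentElem_comp_of_comp_eq_id hRJ)
    fun X hX => mem_nonObservableSubspace_trace.mpr (hker X hX)
end

section
/- Key identity for separability under Assumption (A2): suppose each conditional map factors as M_k = E ∘ K_k where E and K_k are linear maps on the n×n complex matrices, and suppose N (the non-observable subspace of the CE with maps M_k and output C) is E-invariant. Let Π and 𝔼 be idempotent linear endomorphisms of the n×n matrices with ker Π = N, Π ∘ 𝔼 = Π and 𝔼 ∘ Π = Π. Then for every k ∈ Ω, Π ∘ 𝔼 ∘ E ∘ K_k ∘ 𝔼 = Π ∘ 𝔼 ∘ E ∘ 𝔼 ∘ K_k ∘ 𝔼. -/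
open Matrix

section

variable {R U V W Z : Type*} [Ring R] [AddCommMonoid U] [Module R U] [AddCommGroup V] [Module R V]
  [AddCommGroup W] [Module R W] [AddCommGroup Z] [Module R Z]

theorem comp_eq_comp_of_ker_le_ker {p : V →ₗ[R] W} {q : V →ₗ[R] Z} {f g : U →ₗ[R] V}
    (hpq : LinearMap.ker p ≤ LinearMap.ker q) (hfg : p ∘ₗ f = p ∘ₗ g) : q ∘ₗ f = q ∘ₗ g := by
  ext x
  have hx : f x - g x ∈ LinearMap.ker p :=
    LinearMap.sub_mem_ker_iff.2 (LinearMap.congr_fun hfg x)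
  exact LinearMap.sub_mem_ker_iff.1 (hpq hx)

/- By invariance `P ∘ E` vanishes on `ker P`, so it only sees classes modulo `ker P`, and `Q` fixes
every such class. -/
theorem separability_key_identity_A2_general {P : V →ₗ[R] W} {E Q : Module.End R V}
    (hE : LinearMap.ker P ∈ Module.End.invtSubmodule E) (hPQ : P ∘ₗ Q = P) (K : U →ₗ[R] V) :
    P ∘ₗ Q ∘ₗ E ∘ₗ K = P ∘ₗ Q ∘ₗ E ∘ₗ Q ∘ₗ K := by
  have hker : LinearMap.ker P ≤ LinearMap.ker (P ∘ₗ E) := hE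
  have hK : P ∘ₗ K = P ∘ₗ Q ∘ₗ K := by rw [← LinearMap.comp_assoc, hPQ]
  have hEK : (P ∘ₗ E) ∘ₗ K = (P ∘ₗ E) ∘ₗ Q ∘ₗ K := comp_eq_comp_of_ker_le_ker hker hK
  simpa only [← LinearMap.comp_assoc, hPQ] using hEK

end

/-- Key identity for separability under Assumption (A2): if `M_k = E ∘ K_k`, the
non-observable subspace `N` is `E`-invariant, and `Π`, `𝔼` are idempotents with
`ker Π = N`, `Π ∘ 𝔼 = Π`, `𝔼 ∘ Π = Π`, then
`Π ∘ 𝔼 ∘ E ∘ K_k ∘ 𝔼 = Π ∘ 𝔼 ∘ E ∘ 𝔼 ∘ K_k ∘ 𝔼` for every `k`. -/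
theorem separability_key_identity_A2 {Ω : Type*} [Fintype Ω] {n : ℕ} (hn : 1 ≤ n)
    {Y : Type*} [AddCommGroup Y] [Module ℂ Y] [FiniteDimensional ℂ Y]
    (M K : Ω → Matrix (Fin n) (Fin n) ℂ →ₗ[ℂ] Matrix (Fin n) (Fin n) ℂ)
    (E : Matrix (Fin n) (Fin n) ℂ →ₗ[ℂ] Matrix (Fin n) (Fin n) ℂ)
    (C : Matrix (Fin n) (Fin n) ℂ →ₗ[ℂ] Y)
    (hfac : ∀ k, M k = E.comp (K k))
    (hEinv : ∀ X ∈ NonObs M C, E X ∈ NonObs M C)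
    (P Ee : Matrix (Fin n) (Fin n) ℂ →ₗ[ℂ] Matrix (Fin n) (Fin n) ℂ)
    (hPP : P.comp P = P) (hEeEe : Ee.comp Ee = Ee)
    (hkerP : ∀ X, P X = 0 ↔ X ∈ NonObs M C)
    (hPEe : P.comp Ee = P) (hEeP : Ee.comp P = P) :
    ∀ k : Ω,
      P.comp (Ee.comp (E.comp ((K k).comp Ee))) =
        P.comp (Ee.comp (E.comp (Ee.comp ((K k).comp Ee)))) := by
  intro k
  have hE : LinearMap.ker P ∈ Module.End.invtSubmodule E := fun X hX =>
    (hkerP (E X)).2 (hEinv X ((hkerP X).1 hX))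
  exact separability_key_identity_A2_general hE hPEe (K k ∘ₗ Ee)
end
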